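/- Let a k-SAT formula and a partial assignment x*:U→{0,1} be given, and let {𝔲_{a→i}} denote the clause-to-variable messages of the least WP fixed point. Say that a variable i∈V is supported to the value v∈{0,1} if either (i∈U and x*_i=v) or there exists a∈∂i with z(i,a)=1−v and 𝔲_{a→i}=I. Then the derivation closure of (U,x*) is contradictory (i.e. contains both (i,0) and (i,1) for some variable i) if and only if some variable i∈V is supported to both values 0 and 1. In particular, when no variable of U is supported to the value opposite to its fixed value, this happens if and only if there exist i∈V, a∈∂₊i and b∈∂₋i with 𝔲_{a→i}=𝔲_{b→i}=I. -/

import Mathlib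

open scoped Classical

/-- A k-SAT formula over variables `V` with clause set `A`:
`scope a` is the set `∂a` of variables of clause `a`, and `z a i` is the
value of variable `i` that does NOT satisfy clause `a`. -/
structure KSAT (V A : Type) where
  scope : A → Finset V
  z : A → V → Bool

namespace KSAT

variable {V A : Type}

/-- `∂i`: clauses containing variable `i`. -/
noncomputable def nbr [Fintype A] (Φ : KSAT V A) (i : V) : Finset A :=
  Finset.univ.filter fun a => i ∈ Φ.scope a

/-- `∂₊i`: clauses in `∂i` with `z(i,a) = 1`. -/
noncomputable def nbrPos [Fintype A] (Φ : KSAT V A) (i : V) : Finset A :=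
  (Φ.nbr i).filter fun a => Φ.z a i = true

/-- `∂₋i`: clauses in `∂i` with `z(i,a) = 0`. -/
noncomputable def nbrNeg [Fintype A] (Φ : KSAT V A) (i : V) : Finset A :=
  (Φ.nbr i).filter fun a => Φ.z a i = false

/-- `∂₋i(a)`: clauses `b ∈ ∂i ∖ {a}` that disagree with `a` on the satisfying
value of `x_i`. -/
noncomputable def disag [Fintype A] [DecidableEq A] (Φ : KSAT V A) (i : V) (a : A) : Finset A :=
  ((Φ.nbr i).erase a).filter fun b => Φ.z b i = !Φ.z a i

/-- `∂₊i(a)`: clauses `b ∈ ∂i ∖ {a}` that agree with `a` on the satisfying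
value of `x_i`. -/
noncomputable def agree [Fintype A] [DecidableEq A] (Φ : KSAT V A) (i : V) (a : A) : Finset A :=
  ((Φ.nbr i).erase a).filter fun b => Φ.z b i = Φ.z a i

/-- Warning propagation update for a variable-to-clause message `𝔥_{i→a}`,
computed from the clause-to-variable messages `u`.  Messages take values in
`Bool`, with `false` standing for `0` and `true` for `I`. -/
noncomputable def stepH [Fintype A] [DecidableEq A] (Φ : KSAT V A) (U : Finset V)
    (xs : V → Bool) (u : A → V → Bool) (i : V) (a : A) : Bool :=
  decide ((i ∈ U ∧ xs i = Φ.z a i) ∨ ∃ b ∈ Φ.disag i a, u b i = true)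

/-- Warning propagation update for a clause-to-variable message `𝔲_{a→i}`,
computed from the variable-to-clause messages `h`. -/
noncomputable def stepU [DecidableEq V] (Φ : KSAT V A) (h : V → A → Bool)
    (a : A) (i : V) : Bool :=
  decide (∀ j ∈ (Φ.scope a).erase i, h j a = true)

/-- A WP fixed point: the update equations hold on every directed edge of the
factor graph. -/
def IsWPFixedPoint [Fintype A] [DecidableEq V] [DecidableEq A] (Φ : KSAT V A)
    (U : Finset V) (xs : V → Bool) (h : V → A → Bool) (u : A → V → Bool) : Prop :=
  ∀ a : A, ∀ i ∈ Φ.scope a,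
    h i a = Φ.stepH U xs u i a ∧ u a i = Φ.stepU h a i

end KSAT

namespace KSAT

/-- The derivation closure of the partial assignment `(U, xs)` under
unit-clause propagation: `Derived Φ U xs i v` means the pair `(i, v)` belongs
to the smallest set of (variable, value) pairs containing `(i, xs i)` for
every `i ∈ U` and closed under unit-clause propagation. -/
inductive Derived [DecidableEq V] (Φ : KSAT V A) (U : Finset V) (xs : V → Bool) :
    V → Bool → Prop
  | fixed (i : V) (hi : i ∈ U) : Derived Φ U xs i (xs i)
  | ucp (a : A) (i : V) (hia : i ∈ Φ.scope a)
      (hrest : ∀ j ∈ (Φ.scope a).erase i, Derived Φ U xs j (Φ.z a j)) :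
      Derived Φ U xs i (!Φ.z a i)

end KSAT

namespace KSAT

/-- `i` is supported to the value `v`: either `i` is fixed to `v`, or some
clause `a ∈ ∂i` with `z(i,a) = 1 - v` sends the message `𝔲_{a→i} = I`. -/
def Supported [Fintype A] (Φ : KSAT V A) (U : Finset V) (xs : V → Bool)
    (u : A → V → Bool) (i : V) (v : Bool) : Prop :=
  (i ∈ U ∧ xs i = v) ∨ ∃ a ∈ Φ.nbr i, Φ.z a i = !v ∧ u a i = true

end KSAT

/-!
In any WP fixed point, the pairs `(i, v)` such that `i` is supported to `v` contain the initial
pairs and are closed under unit-clause propagation, so they include the derivation closure.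
Conversely, the messages read off the derivation closure form a fixed point whose supported pairs
are exactly the derived ones; as support is monotone in the messages, the least fixed point
supports nothing more.
-/

namespace KSAT

variable {V A : Type} {Φ : KSAT V A} {U : Finset V} {xs : V → Bool}

theorem mem_nbr [Fintype A] {i : V} {a : A} : a ∈ Φ.nbr i ↔ i ∈ Φ.scope a := by
  simp [nbr]

section Support

variable [Fintype A] {u : A → V → Bool}

theorem Supported.mono {u' : A → V → Bool} {i : V} {v : Bool}
    (hle : ∀ a, ∀ i ∈ Φ.scope a, u a i ≤ u' a i) (hs : Φ.Supported U xs u i v) :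
    Φ.Supported U xs u' i v :=
  hs.imp_right fun ⟨a, ha, hz, hu⟩ => ⟨a, ha, hz, hle a i (mem_nbr.1 ha) hu⟩

theorem supported_false_iff {i : V} :
    Φ.Supported U xs u i false ↔ (i ∈ U ∧ xs i = false) ∨ ∃ a ∈ Φ.nbrPos i, u a i = true := by
  simp [Supported, nbrPos, and_assoc]

theorem supported_true_iff {i : V} :
    Φ.Supported U xs u i true ↔ (i ∈ U ∧ xs i = true) ∨ ∃ a ∈ Φ.nbrNeg i, u a i = true := by
  simp [Supported, nbrNeg, and_assoc]

theorem exists_supported_both_iff_exists_opposite_warnings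
    (hU : ∀ i ∈ U, ¬ Φ.Supported U xs u i (!xs i)) :
    (∃ i, Φ.Supported U xs u i false ∧ Φ.Supported U xs u i true) ↔
      ∃ i, ∃ a ∈ Φ.nbrPos i, ∃ b ∈ Φ.nbrNeg i, u a i = true ∧ u b i = true := by
  constructor
  · rintro ⟨i, hfalse, htrue⟩
    have hi : i ∉ U := fun hi => hU i hi (by cases xs i <;> assumption)
    obtain ⟨a, ha, hua⟩ := (supported_false_iff.1 hfalse).resolve_left fun hfixed => hi hfixed.1
    obtain ⟨b, hb, hub⟩ := (supported_true_iff.1 htrue).resolve_left fun hfixed => hi hfixed.1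
    exact ⟨i, a, ha, b, hb, hua, hub⟩
  · rintro ⟨i, a, ha, b, hb, hua, hub⟩
    exact ⟨i, supported_false_iff.2 (.inr ⟨a, ha, hua⟩), supported_true_iff.2 (.inr ⟨b, hb, hub⟩)⟩

end Support

section WarningPropagation

theorem stepU_eq_true_iff [DecidableEq V] {h : V → A → Bool} {a : A} {i : V} :
    Φ.stepU h a i = true ↔ ∀ j ∈ (Φ.scope a).erase i, h j a = true :=
  decide_eq_true_iff

variable [Fintype A] [DecidableEq A]

theorem mem_disag {i : V} {a b : A} :
    b ∈ Φ.disag i a ↔ b ∈ Φ.nbr i ∧ Φ.z b i = !Φ.z a i := by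
  have ne_of_disagree : Φ.z b i = (!Φ.z a i) → b ≠ a := by
    rintro hz rfl
    simp at hz
  simp only [disag, Finset.mem_filter, Finset.mem_erase]
  tauto

theorem stepH_eq_true_iff_supported {u : A → V → Bool} {i : V} {a : A} :
    Φ.stepH U xs u i a = true ↔ Φ.Supported U xs u i (Φ.z a i) := by
  simp only [stepH, Supported, decide_eq_true_iff, mem_disag, and_assoc]

variable [DecidableEq V] {h : V → A → Bool} {u : A → V → Bool}

theorem IsWPFixedPoint.clause_message_eq_true_iff (hfp : Φ.IsWPFixedPoint U xs h u) {a : A} {i : V}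
    (hi : i ∈ Φ.scope a) :
    u a i = true ↔ ∀ j ∈ (Φ.scope a).erase i, Φ.Supported U xs u j (Φ.z a j) := by
  rw [(hfp a i hi).2, stepU_eq_true_iff]
  refine forall₂_congr fun j hj => ?_
  rw [(hfp a j (Finset.mem_of_mem_erase hj)).1, stepH_eq_true_iff_supported]

theorem IsWPFixedPoint.supported_of_derived (hfp : Φ.IsWPFixedPoint U xs h u) {i : V} {v : Bool}
    (hd : Φ.Derived U xs i v) : Φ.Supported U xs u i v := by
  induction hd with
  | fixed i hi => exact .inl ⟨hi, rfl⟩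
  | ucp a i hia _ ih =>
    exact .inr ⟨a, mem_nbr.2 hia, (Bool.not_not _).symm,
      (hfp.clause_message_eq_true_iff hia).2 ih⟩

end WarningPropagation

section DerivedMessages

variable [DecidableEq V]

/-- The variable-to-clause messages read off the derivation closure: `i` warns `a` iff the value
of `i` that does not satisfy `a` is derived. -/
noncomputable def derivedH (Φ : KSAT V A) (U : Finset V) (xs : V → Bool) (i : V) (a : A) : Bool :=
  decide (Φ.Derived U xs i (Φ.z a i))

/-- The clause-to-variable messages read off the derivation closure, obtained from
`KSAT.derivedH` by one warning propagation update. -/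
noncomputable def derivedU (Φ : KSAT V A) (U : Finset V) (xs : V → Bool) (a : A) (i : V) : Bool :=
  Φ.stepU (Φ.derivedH U xs) a i

theorem derivedU_eq_true_iff {a : A} {i : V} :
    Φ.derivedU U xs a i = true ↔
      ∀ j ∈ (Φ.scope a).erase i, Φ.Derived U xs j (Φ.z a j) := by
  simp only [derivedU, stepU_eq_true_iff, derivedH, decide_eq_true_iff]

variable [Fintype A]

theorem supported_derivedU_iff_derived {i : V} {v : Bool} :
    Φ.Supported U xs (Φ.derivedU U xs) i v ↔ Φ.Derived U xs i v := by
  constructor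
  · rintro (⟨hi, rfl⟩ | ⟨a, ha, hz, hu⟩)
    · exact .fixed i hi
    · obtain rfl : v = !Φ.z a i := by rw [hz, Bool.not_not]
      exact .ucp a i (mem_nbr.1 ha) (derivedU_eq_true_iff.1 hu)
  · rintro (⟨_, hi⟩ | ⟨a, _, hia, hrest⟩)
    · exact .inl ⟨hi, rfl⟩
    · exact .inr ⟨a, mem_nbr.2 hia, (Bool.not_not _).symm, derivedU_eq_true_iff.2 hrest⟩

variable [DecidableEq A]

theorem isWPFixedPoint_derived :
    Φ.IsWPFixedPoint U xs (Φ.derivedH U xs) (Φ.derivedU U xs) := by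
  refine fun a i _ => ⟨?_, rfl⟩
  rw [Bool.eq_iff_iff, stepH_eq_true_iff_supported, supported_derivedU_iff_derived, derivedH,
    decide_eq_true_iff]

theorem IsWPFixedPoint.derived_iff_supported {h : V → A → Bool} {u : A → V → Bool}
    (hfp : Φ.IsWPFixedPoint U xs h u)
    (hle : ∀ a, ∀ i ∈ Φ.scope a, u a i ≤ Φ.derivedU U xs a i) {i : V} {v : Bool} :
    Φ.Derived U xs i v ↔ Φ.Supported U xs u i v :=
  ⟨hfp.supported_of_derived, fun hs => supported_derivedU_iff_derived.1 (hs.mono hle)⟩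

end DerivedMessages

end KSAT

theorem contradiction_iff_doubly_supported_general
    {V A : Type} [Fintype A] [DecidableEq V] [DecidableEq A]
    (Φ : KSAT V A) (U : Finset V) (xs : V → Bool)
    (h : V → A → Bool) (u : A → V → Bool)
    (hfp : Φ.IsWPFixedPoint U xs h u)
    (hleast : ∀ h₁ u₁, Φ.IsWPFixedPoint U xs h₁ u₁ →
      ∀ a : A, ∀ i ∈ Φ.scope a, h i a ≤ h₁ i a ∧ u a i ≤ u₁ a i) :
    ((∃ i : V, KSAT.Derived Φ U xs i false ∧ KSAT.Derived Φ U xs i true) ↔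
      (∃ i : V, Φ.Supported U xs u i false ∧ Φ.Supported U xs u i true)) ∧
    ((∀ i ∈ U, ¬ Φ.Supported U xs u i (!xs i)) →
      ((∃ i : V, KSAT.Derived Φ U xs i false ∧ KSAT.Derived Φ U xs i true) ↔
        (∃ i : V, ∃ a ∈ Φ.nbrPos i, ∃ b ∈ Φ.nbrNeg i,
          u a i = true ∧ u b i = true))) := by
  have hle : ∀ a, ∀ i ∈ Φ.scope a, u a i ≤ Φ.derivedU U xs a i := fun a i hi =>
    (hleast _ _ KSAT.isWPFixedPoint_derived a i hi).2
  simp only [hfp.derived_iff_supported hle, true_and]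
  exact KSAT.exists_supported_both_iff_exists_opposite_warnings

/-- the derivation closure of `(U, xs)` is contradictory iff
some variable is supported (in the least WP fixed point) to both values; and,
provided no fixed variable is supported to the value opposite to its fixed
value, this happens iff some variable receives `I`-messages both from a clause
in `∂₊i` and from a clause in `∂₋i`. -/
theorem contradiction_iff_doubly_supported
    {V A : Type} [Fintype V] [Fintype A] [DecidableEq V] [DecidableEq A]
    (k : ℕ) (Φ : KSAT V A) (hk : ∀ a : A, (Φ.scope a).card = k)
    (U : Finset V) (xs : V → Bool)
    (h : V → A → Bool) (u : A → V → Bool)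
    (hfp : Φ.IsWPFixedPoint U xs h u)
    (hleast : ∀ h₁ u₁, Φ.IsWPFixedPoint U xs h₁ u₁ →
      ∀ a : A, ∀ i ∈ Φ.scope a, h i a ≤ h₁ i a ∧ u a i ≤ u₁ a i) :
    ((∃ i : V, KSAT.Derived Φ U xs i false ∧ KSAT.Derived Φ U xs i true) ↔
      (∃ i : V, Φ.Supported U xs u i false ∧ Φ.Supported U xs u i true)) ∧
    ((∀ i ∈ U, ¬ Φ.Supported U xs u i (!xs i)) →
      ((∃ i : V, KSAT.Derived Φ U xs i false ∧ KSAT.Derived Φ U xs i true) ↔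
        (∃ i : V, ∃ a ∈ Φ.nbrPos i, ∃ b ∈ Φ.nbrNeg i,
          u a i = true ∧ u b i = true))) :=
  contradiction_iff_doubly_supported_general Φ U xs h u hfp hleast
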